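/- Let F be a Finsler function on ℝⁿ that satisfies the Hamel equations in the standard coordinates. Then a C² curve γ : I → ℝⁿ with nowhere vanishing velocity satisfies the Euler–Lagrange equations for F (for every i and t, (d/dt)[∂F/∂y^i(γ(t),γ'(t))] = ∂F/∂x^i(γ(t),γ'(t))) if and only if for every index i and every t ∈ I one has ∑_k ∂²F/∂y^k∂y^i(γ(t),γ'(t))·(γ^k)''(t) = 0. -/

import Mathlib

open scoped BigOperators Topology
noncomputable section

abbrev E (n : ℕ) := Fin n → ℝ

/-- Partial derivative with respect to the base coordinate `x^i`. -/
def pdx {n : ℕ} (i : Fin n) (f : E n × E n → ℝ) (p : E n × E n) : ℝ :=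
  fderiv ℝ f p (Pi.single i 1, 0)

/-- Partial derivative with respect to the fibre coordinate `y^i`. -/
def pdy {n : ℕ} (i : Fin n) (f : E n × E n → ℝ) (p : E n × E n) : ℝ :=
  fderiv ℝ f p (0, Pi.single i 1)

/-- A Finsler function on `ℝⁿ`. -/
structure IsFinsler {n : ℕ} (F : E n × E n → ℝ) : Prop where
  smooth : ContDiffOn ℝ (⊤ : ℕ∞) F {p : E n × E n | p.2 ≠ 0}
  homog : ∀ (x y : E n) (c : ℝ), 0 < c → F (x, c • y) = c * F (x, y)
  pos : ∀ (x y : E n), y ≠ 0 → 0 < F (x, y)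
  posDef : ∀ (x y : E n), y ≠ 0 →
    (Matrix.of fun i j : Fin n =>
      (1 / 2) * pdy i (pdy j (fun p => F p ^ 2)) (x, y)).PosDef

/-- A geodesic of `(ℝⁿ, F)`: a `C²` curve on a nontrivial open interval, with nowhere
vanishing velocity, positive constant speed, satisfying the Euler–Lagrange equations. -/
structure IsGeodesic {n : ℕ} (F : E n × E n → ℝ) (γ : ℝ → E n) (t₁ t₂ : ℝ) : Prop where
  lt : t₁ < t₂
  smooth : ContDiffOn ℝ 2 γ (Set.Ioo t₁ t₂)
  vel : ∀ t ∈ Set.Ioo t₁ t₂, deriv γ t ≠ 0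
  constSpeed : ∃ c : ℝ, 0 < c ∧ ∀ t ∈ Set.Ioo t₁ t₂, F (γ t, deriv γ t) = c
  eulerLagrange : ∀ (i : Fin n), ∀ t ∈ Set.Ioo t₁ t₂,
    deriv (fun s => pdy i F (γ s, deriv γ s)) t = pdx i F (γ t, deriv γ t)

/-- The Hamel equations in the standard coordinates. -/
def SatisfiesHamel {n : ℕ} (F : E n × E n → ℝ) : Prop :=
  ∀ (x y : E n), y ≠ 0 → ∀ i : Fin n,
    ∑ k, pdx k (pdy i F) (x, y) * y k = ∑ k, pdx i (pdy k F) (x, y) * y k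

/-- `(ℝⁿ, F)` is rectilinear in the standard coordinates. -/
def Rectilinear {n : ℕ} (F : E n × E n → ℝ) : Prop :=
  ∀ (γ : ℝ → E n) (t₁ t₂ : ℝ), IsGeodesic F γ t₁ t₂ →
    ∃ (f : ℝ → ℝ) (a b : E n), a ≠ 0 ∧
      ContDiffOn ℝ 2 f (Set.Ioo t₁ t₂) ∧
      (∀ t ∈ Set.Ioo t₁ t₂, 0 < deriv f t) ∧
      ∀ t ∈ Set.Ioo t₁ t₂, γ t = f t • a + b

/-!
Homogeneity enters through the base derivative of Euler's identity `∑ₖ ∂F/∂yᵏ · yᵏ = F`, namely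
`∑ₖ ∂²F/∂xⁱ∂yᵏ · yᵏ = ∂F/∂xⁱ`. The left-hand side is the right-hand side of the Hamel equations,
which therefore say that `∑ₖ ∂²F/∂xᵏ∂yⁱ · yᵏ = ∂F/∂xⁱ`. The chain rule gives
`d/dt ∂F/∂yⁱ(γ, γ') = ∑ₖ ∂²F/∂xᵏ∂yⁱ · (γᵏ)' + ∑ₖ ∂²F/∂yᵏ∂yⁱ · (γᵏ)''`, and the first sum is exactly
`∂F/∂xⁱ`, so the Euler–Lagrange equations say that the second one vanishes.
-/

section NormedSpace

variable {V W : Type*} [NormedAddCommGroup V] [NormedSpace ℝ V]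
  [NormedAddCommGroup W] [NormedSpace ℝ W]

theorem differentiableAt_deriv {γ : ℝ → V} {t : ℝ} (hγ : ContDiffAt ℝ 2 γ t) :
    DifferentiableAt ℝ (deriv γ) t := by
  have hfderiv : DifferentiableAt ℝ (fderiv ℝ γ) t :=
    (hγ.fderiv_right (m := 1) one_add_one_eq_two.le).differentiableAt one_ne_zero
  simpa only [fderiv_apply_one_eq_deriv] using hfderiv.clm_apply (differentiableAt_const 1)

theorem hasFDerivAt_apply_self_of_homogeneous {f : V → W} {f' : V →L[ℝ] W} {x : V} {r : ℝ}
    (hf : HasFDerivAt f f' x) (hom : ∀ c : ℝ, 0 < c → f (c • x) = c ^ r • f x) :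
    f' x = r • f x := by
  have hray : HasDerivAt (fun c : ℝ => c • x) x 1 := by
    simpa using (hasDerivAt_id (1 : ℝ)).smul_const x
  have hchain : HasDerivAt (fun c : ℝ => f (c • x)) (f' x) 1 :=
    hf.comp_hasDerivAt_of_eq 1 hray (one_smul ℝ x).symm
  have hpow : HasDerivAt (fun c : ℝ => c ^ r • f x) (r • f x) 1 := by
    simpa using (Real.hasDerivAt_rpow_const (p := r) (Or.inl one_ne_zero)).smul_const (f x)
  refine hchain.unique (hpow.congr_of_eventuallyEq ?_)
  filter_upwards [lt_mem_nhds zero_lt_one] with c hc using hom c hc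

end NormedSpace

section Coordinates

variable {n : ℕ} {F : E n × E n → ℝ} {p : E n × E n}

theorem fderiv_apply_eq_sum_pdx_add_sum_pdy (f : E n × E n → ℝ) (p : E n × E n) (u v : E n) :
    fderiv ℝ f p (u, v) = ∑ k, pdx k f p * u k + ∑ k, pdy k f p * v k := by
  have hbasis (L : E n →L[ℝ] ℝ) (w : E n) : L w = ∑ k, L (Pi.single k 1) * w k := by
    conv_lhs => rw [pi_eq_sum_univ' w]
    simp [mul_comm, map_sum]
  rw [← (fderiv ℝ f p).comp_inl_add_comp_inr, hbasis _ u, hbasis _ v]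
  rfl

theorem differentiableAt_pdy (hF : ContDiffAt ℝ 2 F p) (i : Fin n) :
    DifferentiableAt ℝ (pdy i F) p :=
  ((hF.fderiv_right (m := 1) one_add_one_eq_two.le).differentiableAt one_ne_zero).clm_apply
    (differentiableAt_const _)

theorem hasDerivAt_comp_prodMk {f : E n × E n → ℝ} {γ v : ℝ → E n} {γ' v' : E n} {t : ℝ}
    (hf : DifferentiableAt ℝ f (γ t, v t)) (hγ : HasDerivAt γ γ' t) (hv : HasDerivAt v v' t) :
    HasDerivAt (fun s => f (γ s, v s))
      (∑ k, pdx k f (γ t, v t) * γ' k + ∑ k, pdy k f (γ t, v t) * v' k) t := by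
  rw [← fderiv_apply_eq_sum_pdx_add_sum_pdy]
  exact hf.hasFDerivAt.comp_hasDerivAt t (hγ.prodMk hv)

theorem sum_pdy_mul_eq_self (hF : DifferentiableAt ℝ F p)
    (hom : ∀ c : ℝ, 0 < c → F (p.1, c • p.2) = c * F p) :
    ∑ k, pdy k F p * p.2 k = F p := by
  have hfibre : HasFDerivAt (fun y => F (p.1, y))
      ((fderiv ℝ F p).comp (ContinuousLinearMap.inr ℝ (E n) (E n))) p.2 :=
    hF.hasFDerivAt.comp p.2 (hasFDerivAt_prodMk_right p.1 p.2)
  have heuler : fderiv ℝ F p (0, p.2) = F p := by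
    simpa using hasFDerivAt_apply_self_of_homogeneous (r := 1) hfibre (by simpa using hom)
  simpa [fderiv_apply_eq_sum_pdx_add_sum_pdy] using heuler

theorem sum_pdx_pdy_mul_eq_pdx (hF : ContDiffAt ℝ 2 F p)
    (hom : ∀ᶠ q in 𝓝 p, ∀ c : ℝ, 0 < c → F (q.1, c • q.2) = c * F q) (i : Fin n) :
    ∑ k, pdx i (pdy k F) p * p.2 k = pdx i F p := by
  have heuler : (fun q => ∑ k, pdy k F q * q.2 k) =ᶠ[𝓝 p] F := by
    filter_upwards [hom, hF.eventually (by simp)] with q hq hFq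
    exact sum_pdy_mul_eq_self (hFq.differentiableAt two_ne_zero) hq
  have hcoord (k : Fin n) : HasFDerivAt (fun q : E n × E n => q.2 k)
      ((ContinuousLinearMap.proj k).comp (ContinuousLinearMap.snd ℝ (E n) (E n))) p :=
    ((ContinuousLinearMap.proj k).comp (ContinuousLinearMap.snd ℝ (E n) (E n))).hasFDerivAt
  have hsum := HasFDerivAt.fun_sum (u := Finset.univ) fun k _ =>
    (differentiableAt_pdy hF k).hasFDerivAt.fun_mul (hcoord k)
  rw [pdx, ← heuler.fderiv_eq, hsum.fderiv]
  simp [pdx, mul_comm]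

theorem deriv_pdy_velocity_eq_pdx_add {γ : ℝ → E n} {t : ℝ} {i : Fin n}
    (hF : ContDiffAt ℝ 2 F (γ t, deriv γ t))
    (hom : ∀ᶠ q in 𝓝 (γ t, deriv γ t), ∀ c : ℝ, 0 < c → F (q.1, c • q.2) = c * F q)
    (hHam : ∑ k, pdx k (pdy i F) (γ t, deriv γ t) * deriv γ t k =
      ∑ k, pdx i (pdy k F) (γ t, deriv γ t) * deriv γ t k)
    (hγ : DifferentiableAt ℝ γ t) (hacc : DifferentiableAt ℝ (deriv γ) t) :
    deriv (fun s => pdy i F (γ s, deriv γ s)) t = pdx i F (γ t, deriv γ t) +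
      ∑ k, pdy k (pdy i F) (γ t, deriv γ t) * deriv (fun s => deriv γ s k) t := by
  have hcoord (k : Fin n) : deriv (fun s => deriv γ s k) t = deriv (deriv γ) t k :=
    (hasDerivAt_pi.1 hacc.hasDerivAt k).deriv
  simp only [hcoord]
  calc deriv (fun s => pdy i F (γ s, deriv γ s)) t
      = ∑ k, pdx k (pdy i F) (γ t, deriv γ t) * deriv γ t k +
          ∑ k, pdy k (pdy i F) (γ t, deriv γ t) * deriv (deriv γ) t k :=
        (hasDerivAt_comp_prodMk (differentiableAt_pdy hF i) hγ.hasDerivAt hacc.hasDerivAt).deriv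
    _ = pdx i F (γ t, deriv γ t) +
          ∑ k, pdy k (pdy i F) (γ t, deriv γ t) * deriv (deriv γ) t k := by
        rw [hHam, sum_pdx_pdy_mul_eq_pdx hF hom i]

theorem statement1_general (hF : ContDiffOn ℝ 2 F {p | p.2 ≠ 0})
    (hom : ∀ (x y : E n) (c : ℝ), 0 < c → F (x, c • y) = c * F (x, y))
    (hHam : SatisfiesHamel F) {γ : ℝ → E n} {t : ℝ} (hvel : deriv γ t ≠ 0)
    (hacc : DifferentiableAt ℝ (deriv γ) t) (i : Fin n) :
    deriv (fun s => pdy i F (γ s, deriv γ s)) t = pdx i F (γ t, deriv γ t) ↔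
      ∑ k, pdy k (pdy i F) (γ t, deriv γ t) * deriv (fun s => deriv γ s k) t = 0 := by
  have hslit : IsOpen {p : E n × E n | p.2 ≠ 0} := isOpen_ne.preimage continuous_snd
  rw [deriv_pdy_velocity_eq_pdx_add (hF.contDiffAt (hslit.mem_nhds hvel))
    (.of_forall fun q => hom q.1 q.2) (hHam _ _ hvel i)
    (differentiableAt_of_deriv_ne_zero hvel) hacc, add_eq_left]

end Coordinates

/-- If `F` satisfies the Hamel equations, then a `C²` curve with nowhere
vanishing velocity satisfies the Euler–Lagrange equations iff
`∑_k ∂²F/∂y^k∂y^i(γ,γ')·(γ^k)'' = 0`. -/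
theorem statement1 {n : ℕ} (F : E n × E n → ℝ) (hF : IsFinsler F)
    (hHam : SatisfiesHamel F) (γ : ℝ → E n) (t₁ t₂ : ℝ) (hlt : t₁ < t₂)
    (hγ : ContDiffOn ℝ 2 γ (Set.Ioo t₁ t₂))
    (hvel : ∀ t ∈ Set.Ioo t₁ t₂, deriv γ t ≠ 0) :
    (∀ (i : Fin n), ∀ t ∈ Set.Ioo t₁ t₂,
        deriv (fun s => pdy i F (γ s, deriv γ s)) t = pdx i F (γ t, deriv γ t)) ↔
    (∀ (i : Fin n), ∀ t ∈ Set.Ioo t₁ t₂,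
        ∑ k, pdy k (pdy i F) (γ t, deriv γ t) * deriv (fun s => deriv γ s k) t = 0) :=
  forall₃_congr fun i t ht => statement1_general (hF.smooth.of_le (by norm_cast)) hF.homog hHam
    (hvel t ht) (differentiableAt_deriv (hγ.contDiffAt (isOpen_Ioo.mem_nhds ht))) i
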